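/- Let 𝒞 ⊆ ℤ_m^n be a linear (n, m^k, d) (𝕡,π)-code. Then 𝒞 is an MDS (𝕡,π)-code if and only if there exists an ideal I of 𝕡 with full count and |I| = l·⌊(d−1)/l⌋ such that 𝒞 is I-perfect. -/

import Mathlib

open scoped Classical

noncomputable section

/-- Lee weight of an element of `ZMod m`. -/
def leeWt (m : ℕ) (a : ZMod m) : ℕ := min a.val (m - a.val)

/-- Block Lee weight of the `i`-th block of `u`. -/
def blockWt (m s : ℕ) (π : Fin s → ℕ) (u : ∀ i : Fin s, Fin (π i) → ZMod m)
    (i : Fin s) : ℕ :=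
  Finset.univ.sup fun t => leeWt m (u i t)

/-- The `(𝕡,π)`-weight of `u`. -/
def pomsetWt (m s : ℕ) (P : PartialOrder (Fin s)) (π : Fin s → ℕ)
    (u : ∀ i : Fin s, Fin (π i) → ZMod m) : ℕ :=
  ∑ i : Fin s,
    if ∃ j, j ≠ i ∧ P.le i j ∧ 0 < blockWt m s π u j then m / 2
    else blockWt m s π u i

/-- The pomset block distance. -/
def pomsetDist (m s : ℕ) (P : PartialOrder (Fin s)) (π : Fin s → ℕ)
    (u v : ∀ i : Fin s, Fin (π i) → ZMod m) : ℕ :=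
  pomsetWt m s P π (u - v)

/-- An ideal of the pomset `𝕡`, given by its count function `I : [s] → {0,…,⌊m/2⌋}`. -/
def IsIdeal (m s : ℕ) (P : PartialOrder (Fin s)) (I : Fin s → ℕ) : Prop :=
  (∀ a, I a ≤ m / 2) ∧ ∀ a b, 0 < I a → P.le b a → b ≠ a → I b = m / 2

/-- An ideal has full count if every element of its root set has count `⌊m/2⌋`. -/
def FullCount (m : ℕ) {s : ℕ} (I : Fin s → ℕ) : Prop :=
  ∀ a, 0 < I a → I a = m / 2

/-- The cardinality `|I|` of an ideal. -/
def idealCard {s : ℕ} (I : Fin s → ℕ) : ℕ := ∑ a, I a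

/-- The cardinality `|I*|` of the root set of an ideal. -/
def rootCard {s : ℕ} (I : Fin s → ℕ) : ℕ :=
  (Finset.univ.filter fun a => 0 < I a).card

/-- `Σ_{i ∈ I*} k_i`. -/
def rootSum {s : ℕ} (π I : Fin s → ℕ) : ℕ :=
  ∑ a ∈ Finset.univ.filter (fun a => 0 < I a), π a

/-- The `I`-ball centered at `u`. -/
def ballI (m s : ℕ) (π : Fin s → ℕ) (I : Fin s → ℕ)
    (u : ∀ i : Fin s, Fin (π i) → ZMod m) :
    Set (∀ i : Fin s, Fin (π i) → ZMod m) :=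
  {v | ∀ i, blockWt m s π (u - v) i ≤ I i}

/-- `𝒞` is `I`-perfect: the `I`-balls centered at codewords are pairwise
disjoint and cover the whole space. -/
def IPerfect (m s : ℕ) (π : Fin s → ℕ) (I : Fin s → ℕ)
    (C : Set (∀ i : Fin s, Fin (π i) → ZMod m)) : Prop :=
  (C.Pairwise fun c c' => Disjoint (ballI m s π I c) (ballI m s π I c')) ∧
  (⋃ c ∈ C, ballI m s π I c) = Set.univ

/-- The `r`-ball centered at `u`. -/
def ballR (m s : ℕ) (P : PartialOrder (Fin s)) (π : Fin s → ℕ) (r : ℕ)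
    (u : ∀ i : Fin s, Fin (π i) → ZMod m) :
    Set (∀ i : Fin s, Fin (π i) → ZMod m) :=
  {v | pomsetDist m s P π u v ≤ r}

/-- The standard dot product on `ℤ_m^n`. -/
def dotProd (m s : ℕ) (π : Fin s → ℕ)
    (c v : ∀ i : Fin s, Fin (π i) → ZMod m) : ZMod m :=
  ∑ i, ∑ t, c i t * v i t

/-- The dual code `𝒞^⊥`. -/
def dualCode (m s : ℕ) (π : Fin s → ℕ)
    (C : Set (∀ i : Fin s, Fin (π i) → ZMod m)) :
    Set (∀ i : Fin s, Fin (π i) → ZMod m) :=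
  {v | ∀ c ∈ C, dotProd m s π c v = 0}

/-- The dual pomset, encoded by the opposite partial order. -/
def dualOrder (s : ℕ) (P : PartialOrder (Fin s)) : PartialOrder (Fin s) where
  le a b := P.le b a
  lt a b := P.lt b a
  le_refl a := P.le_refl a
  le_trans a b c h1 h2 := P.le_trans _ _ _ h2 h1
  lt_iff_le_not_ge a b := P.lt_iff_le_not_ge b a
  le_antisymm a b h1 h2 := (P.le_antisymm _ _ h1 h2).symm

/-- The minimum `(𝕡,π)`-distance of a code. -/
def minDist (m s : ℕ) (P : PartialOrder (Fin s)) (π : Fin s → ℕ)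
    (C : Set (∀ i : Fin s, Fin (π i) → ZMod m)) : ℕ :=
  sInf {r | ∃ c ∈ C, ∃ c' ∈ C, c ≠ c' ∧ r = pomsetWt m s P π (c - c')}

/-- `𝒞` is an MDS `(𝕡,π)`-code: it attains the Singleton bound
`n − ⌈log_m K⌉ ≥ max { Σ_{i∈I*} k_i : I ideal, |I*| = ⌊(d−1)/⌊m/2⌋⌋ }`. -/
def IsMDS (m s : ℕ) (P : PartialOrder (Fin s)) (π : Fin s → ℕ)
    (C : Set (∀ i : Fin s, Fin (π i) → ZMod m)) : Prop :=
  (∀ I, IsIdeal m s P I →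
      rootCard I = (minDist m s P π C - 1) / (m / 2) →
      rootSum π I ≤ (∑ i, π i) - Nat.clog m (Nat.card ↥C)) ∧
  (∃ I, IsIdeal m s P I ∧
      rootCard I = (minDist m s P π C - 1) / (m / 2) ∧
      rootSum π I = (∑ i, π i) - Nat.clog m (Nat.card ↥C))

/-- The chain pomset on `[s]`: the usual total order on `Fin s`. -/
def chainOrder (s : ℕ) : PartialOrder (Fin s) := inferInstance

theorem aux_leeWt_le (m : ℕ) (a : ZMod m) : leeWt m a ≤ m / 2 := by
  unfold leeWt; omega

theorem aux_leeWt_eq_zero (m : ℕ) (hm : 4 ≤ m) (a : ZMod m) : leeWt m a = 0 ↔ a = 0 := by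
  haveI : NeZero m := ⟨by omega⟩
  have h := ZMod.val_lt a
  rw [← ZMod.val_eq_zero]
  unfold leeWt; omega

theorem aux_blockWt_le (m s : ℕ) (π : Fin s → ℕ) (u : ∀ i : Fin s, Fin (π i) → ZMod m)
    (i : Fin s) : blockWt m s π u i ≤ m / 2 :=
  Finset.sup_le fun _ _ => aux_leeWt_le m _

theorem aux_blockWt_eq_zero (m s : ℕ) (hm : 4 ≤ m) (π : Fin s → ℕ)
    (u : ∀ i : Fin s, Fin (π i) → ZMod m) (i : Fin s) :
    blockWt m s π u i = 0 ↔ u i = 0 := by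
  unfold blockWt
  rw [← bot_eq_zero, Finset.sup_eq_bot_iff]
  simp only [Finset.mem_univ, true_implies, bot_eq_zero, aux_leeWt_eq_zero m hm]
  exact funext_iff.symm

theorem aux_blockWt_sub (m s : ℕ) (hm : 4 ≤ m) (π : Fin s → ℕ)
    (u v : ∀ i : Fin s, Fin (π i) → ZMod m) (i : Fin s) :
    blockWt m s π (u - v) i = 0 ↔ u i = v i := by
  rw [aux_blockWt_eq_zero m s hm, Pi.sub_apply, sub_eq_zero]

/-- For a full-count ideal the ball is a coset of the vectors supported on the root set. -/
theorem aux_mem_ballI (m s : ℕ) (hm : 4 ≤ m) (π I : Fin s → ℕ) (hI : FullCount m I)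
    (u v : ∀ i : Fin s, Fin (π i) → ZMod m) :
    v ∈ ballI m s π I u ↔ ∀ i, I i = 0 → u i = v i := by
  constructor
  · intro h i hi
    rw [← aux_blockWt_sub m s hm]
    have := h i
    omega
  · intro h i
    rcases Nat.eq_zero_or_pos (I i) with hi | hi
    · rw [(aux_blockWt_sub m s hm π u v i).2 (h i hi)]
      exact Nat.zero_le _
    · rw [hI i hi]
      exact aux_blockWt_le _ _ _ _ _

/-- A vector supported on the root set of an ideal has small weight. -/
theorem aux_wt_le (m s : ℕ) (hm : 4 ≤ m) (P : PartialOrder (Fin s)) (π I : Fin s → ℕ)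
    (hI : IsIdeal m s P I) (u : ∀ i : Fin s, Fin (π i) → ZMod m)
    (hu : ∀ i, I i = 0 → u i = 0) :
    pomsetWt m s P π u ≤ rootCard I * (m / 2) := by
  unfold pomsetWt rootCard
  rw [← smul_eq_mul, ← Finset.sum_const, Finset.sum_filter]
  refine Finset.sum_le_sum fun i _ => ?_
  by_cases hi : 0 < I i
  · rw [if_pos hi]
    split_ifs
    · exact le_rfl
    · exact aux_blockWt_le _ _ _ _ _
  · rw [if_neg hi, if_neg, (aux_blockWt_eq_zero m s hm π u i).2 (hu i (by omega))]
    rintro ⟨j, hji, hij, hj⟩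
    have hj0 : 0 < I j := by
      by_contra h
      rw [(aux_blockWt_eq_zero m s hm π u j).2 (hu j (by omega))] at hj
      omega
    have := hI.2 j i hj0 hij (Ne.symm hji)
    omega

/-- Restriction of codewords to the coordinates outside the root set. -/
def auxRes (m s : ℕ) (π I : Fin s → ℕ) (C : Set (∀ i : Fin s, Fin (π i) → ZMod m)) (c : C) :
    ∀ i : {i : Fin s // I i = 0}, Fin (π i.1) → ZMod m := fun i => c.1 i.1

theorem aux_card (m s : ℕ) (hm : 4 ≤ m) (π I : Fin s → ℕ) :
    ∃ e, Nat.card (∀ i : {i : Fin s // I i = 0}, Fin (π i.1) → ZMod m) = m ^ e ∧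
      rootSum π I + e = ∑ i, π i := by
  haveI : NeZero m := ⟨by omega⟩
  refine ⟨∑ i : {i : Fin s // I i = 0}, π i.1, ?_, ?_⟩
  · rw [Nat.card_pi]
    simp [Finset.prod_pow_eq_pow_sum]
  · rw [← Finset.sum_filter_add_sum_filter_not Finset.univ (fun a => 0 < I a) π]
    unfold rootSum
    congr 1
    symm
    apply Finset.sum_subtype
    intro x
    simp

theorem aux_inj (m s : ℕ) (hm : 4 ≤ m) (P : PartialOrder (Fin s)) (π I : Fin s → ℕ)
    (d : ℕ) (C : Set (∀ i : Fin s, Fin (π i) → ZMod m))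
    (hd : ∀ c ∈ C, ∀ c' ∈ C, c ≠ c' → d ≤ pomsetWt m s P π (c - c'))
    (hI : IsIdeal m s P I) (hr : rootCard I = (d - 1) / (m / 2)) :
    Function.Injective (auxRes m s π I C) := by
  intro c c' h
  have h0 : ∀ i, I i = 0 → c.1 i = c'.1 i := fun i hi => congrFun h ⟨i, hi⟩
  by_contra hne
  have h1 := hd c.1 c.2 c'.1 c'.2 (fun h => hne (Subtype.ext h))
  have h2 := aux_wt_le m s hm P π I hI (c.1 - c'.1) (fun i hi => by
    rw [Pi.sub_apply, sub_eq_zero]; exact h0 i hi)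
  have h3 := Nat.div_mul_le_self (d - 1) (m / 2)
  rw [hr] at h2
  have hd0 : d = 0 := by omega
  subst hd0
  rw [Nat.zero_sub, Nat.zero_div] at hr
  unfold rootCard at hr
  rw [Finset.card_eq_zero, Finset.filter_eq_empty_iff] at hr
  apply hne
  apply Subtype.ext
  funext i
  exact h0 i (by have := hr (Finset.mem_univ i); omega)

/-- a linear code is MDS iff it is `I`-perfect for some full-count
ideal of cardinality `⌊m/2⌋·⌊(d−1)/⌊m/2⌋⌋`. -/
theorem mds_iff_I_perfect
    (m s : ℕ) (hm : 4 ≤ m) (hs : 1 ≤ s)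
    (P : PartialOrder (Fin s)) (π : Fin s → ℕ) (hπ : ∀ i, 0 < π i)
    (n k d : ℕ) (hn : n = ∑ i, π i)
    (C : Submodule (ZMod m) (∀ i : Fin s, Fin (π i) → ZMod m))
    (hcard : Nat.card ↥C = m ^ k)
    (hd : IsLeast {r | ∃ c ∈ (C : Set (∀ i : Fin s, Fin (π i) → ZMod m)),
      ∃ c' ∈ (C : Set (∀ i : Fin s, Fin (π i) → ZMod m)), c ≠ c' ∧
        r = pomsetWt m s P π (c - c')} d) :
    IsMDS m s P π (C : Set (∀ i : Fin s, Fin (π i) → ZMod m)) ↔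
      ∃ I, IsIdeal m s P I ∧ FullCount m I ∧
        idealCard I = (m / 2) * ((d - 1) / (m / 2)) ∧
        IPerfect m s π I (C : Set (∀ i : Fin s, Fin (π i) → ZMod m)) := by
  haveI : NeZero m := ⟨by omega⟩
  have hmin : minDist m s P π (C : Set (∀ i : Fin s, Fin (π i) → ZMod m)) = d := hd.csInf_eq
  have hlow : ∀ c ∈ (C : Set (∀ i : Fin s, Fin (π i) → ZMod m)),
      ∀ c' ∈ (C : Set (∀ i : Fin s, Fin (π i) → ZMod m)), c ≠ c' →
        d ≤ pomsetWt m s P π (c - c') := fun c hc c' hc' hne => hd.2 ⟨c, hc, c', hc', hne, rfl⟩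
  have hcard' : Nat.card ↥(C : Set (∀ i : Fin s, Fin (π i) → ZMod m)) = m ^ k := hcard
  have hinj := fun I => aux_inj m s hm P π I d _ hlow
  have hle : ∀ I, IsIdeal m s P I → rootCard I = (d - 1) / (m / 2) →
      rootSum π I + k ≤ ∑ i, π i := by
    intro I hI hr
    obtain ⟨e, he, hsum⟩ := aux_card m s hm π I
    have h := Nat.card_le_card_of_injective _ (hinj I hI hr)
    rw [hcard', he] at h
    have := (Nat.pow_le_pow_iff_right (by omega : 1 < m)).1 h
    omega
  unfold IsMDS
  rw [hmin, hcard', Nat.clog_pow m k (by omega)]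
  constructor
  · rintro ⟨-, J, hJ, hr, hsum⟩
    have hpos : ∀ a, (0 < if 0 < J a then m / 2 else 0) ↔ 0 < J a := by
      intro a; split_ifs <;> omega
    have hI : IsIdeal m s P (fun a => if 0 < J a then m / 2 else 0) := by
      refine ⟨fun a => by dsimp only; split_ifs <;> omega, fun a b ha hba hne => ?_⟩
      have := hJ.2 a b ((hpos a).1 ha) hba hne
      dsimp only
      rw [if_pos (by omega)]
    have hF : FullCount m (fun a => if 0 < J a then m / 2 else 0) := by
      intro a ha
      exact if_pos ((hpos a).1 ha)
    have hrc : rootCard (fun a => if 0 < J a then m / 2 else 0) = rootCard J := by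
      unfold rootCard; simp only [hpos]
    have hrs : rootSum π (fun a => if 0 < J a then m / 2 else 0) = rootSum π J := by
      unfold rootSum; simp only [hpos]
    have hic : idealCard (fun a => if 0 < J a then m / 2 else 0) = m / 2 * rootCard J := by
      unfold idealCard rootCard
      rw [← Finset.sum_filter, Finset.sum_const, smul_eq_mul, mul_comm]
    generalize (fun a => if 0 < J a then m / 2 else 0) = I at *
    have hIr : rootCard I = (d - 1) / (m / 2) := hrc.trans hr
    refine ⟨I, hI, hF, by rw [hic, hr], ?_, ?_⟩
    · intro c hc c' hc' hne
      rw [Set.disjoint_left]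
      intro v hv hv'
      rw [aux_mem_ballI m s hm π I hF] at hv hv'
      apply hne
      exact congrArg Subtype.val (@hinj I hI hIr ⟨c, hc⟩ ⟨c', hc'⟩
        (funext fun i => (hv i.1 i.2).trans (hv' i.1 i.2).symm))
    · obtain ⟨e, he, hsum'⟩ := aux_card m s hm π I
      have hle' := hle I hI hIr
      have hek : e = k := by omega
      have hbij := (Nat.bijective_iff_injective_and_card _).2
        ⟨hinj I hI hIr, by rw [hcard', he, hek]⟩
      rw [Set.eq_univ_iff_forall]
      intro v
      obtain ⟨c, hc⟩ := hbij.2 (fun i => v i.1)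
      refine Set.mem_biUnion c.2 ?_
      rw [aux_mem_ballI m s hm π I hF]
      intro i hi
      exact congrFun hc ⟨i, hi⟩
  · rintro ⟨I, hI, hF, hic, -, hcov⟩
    have hic' : idealCard I = m / 2 * rootCard I := by
      unfold idealCard rootCard
      rw [mul_comm, ← smul_eq_mul, ← Finset.sum_const, Finset.sum_filter]
      refine Finset.sum_congr rfl fun a _ => ?_
      split_ifs with h
      · exact hF a h
      · omega
    have hr : rootCard I = (d - 1) / (m / 2) := by
      rw [hic'] at hic
      exact Nat.eq_of_mul_eq_mul_left (by omega) hic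
    refine ⟨fun I' hI' hr' => by have := hle I' hI' hr'; omega, I, hI, hr, ?_⟩
    have hsurj : Function.Surjective
        (auxRes m s π I (C : Set (∀ i : Fin s, Fin (π i) → ZMod m))) := by
      intro w
      have hv : (fun i => if h : I i = 0 then w ⟨i, h⟩ else 0) ∈
          ⋃ c ∈ (C : Set (∀ i : Fin s, Fin (π i) → ZMod m)), ballI m s π I c := by
        rw [hcov]; trivial
      rw [Set.mem_iUnion₂] at hv
      obtain ⟨c, hc, hv⟩ := hv
      rw [aux_mem_ballI m s hm π I hF] at hv
      refine ⟨⟨c, hc⟩, funext fun i => ?_⟩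
      have := hv i.1 i.2
      rw [dif_pos i.2] at this
      exact this
    obtain ⟨e, he, hsum⟩ := aux_card m s hm π I
    have h := Nat.card_eq_of_bijective _ ⟨hinj I hI hr, hsurj⟩
    rw [hcard', he] at h
    have := Nat.pow_right_injective (by omega : 2 ≤ m) h
    omega


end
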